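/- Let f: F_2^3 → F_2 be the elementary CA rule 30, i.e. f(x_1, x_2, x_3) = x_1 ⊕ x_2 ⊕ x_3 ⊕ x_2 x_3. Then for every n with 3 ≤ n ≤ 20, the number of nonzero linear structures of the function f*: F_2^n → F_2 given by the CA-based construction equals 1 if n is odd and 3 if n is even. -/

import Mathlib

/-- The CA-based construction: given a local rule `f` of `m` variables and `n ≥ m`,
the `n`-variable function `f*` is the XOR of all output cells of the no-boundary CA. -/
def caStar (m n : ℕ) (h : m ≤ n) (f : (Fin m → ZMod 2) → ZMod 2) :
    (Fin n → ZMod 2) → ZMod 2 :=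
  fun x => ∑ i : Fin (n - m + 1),
    f (fun j => x ⟨i.val + j.val, by have hi := i.isLt; have hj := j.isLt; omega⟩)

/-- The ANF coefficient `a_I` of a Boolean function, via the Möbius transform:
`a_I = ⊕_{x : supp(x) ⊆ I} f(x)`. -/
def anf {n : ℕ} (f : (Fin n → ZMod 2) → ZMod 2) (I : Finset (Fin n)) : ZMod 2 :=
  ∑ x ∈ Finset.univ.filter (fun x : Fin n → ZMod 2 => ∀ i, x i = 1 → i ∈ I), f x

/-- The algebraic degree of a Boolean function: `max {|I| : a_I ≠ 0}` (0 for the zero function). -/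
def algDegree {n : ℕ} (f : (Fin n → ZMod 2) → ZMod 2) : ℕ :=
  (Finset.univ.filter fun I : Finset (Fin n) => anf f I ≠ 0).sup Finset.card

/-- The Walsh transform `W_f(a) = Σ_x (-1)^(f(x) ⊕ a·x)`. -/
def walsh {n : ℕ} (f : (Fin n → ZMod 2) → ZMod 2) (a : Fin n → ZMod 2) : ℤ :=
  ∑ x : Fin n → ZMod 2, (-1 : ℤ) ^ (f x + ∑ i, a i * x i).val

/-- The semi-bent value `λ`: `2^((n+1)/2)` for odd `n`, `2^((n+2)/2)` for even `n`. -/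
def sbLambda (n : ℕ) : ℤ := if Odd n then 2 ^ ((n + 1) / 2) else 2 ^ ((n + 2) / 2)

/-- A Boolean function is semi-bent if its Walsh transform takes only the values `0, λ, -λ`. -/
def semiBent {n : ℕ} (f : (Fin n → ZMod 2) → ZMod 2) : Prop :=
  ∀ a, walsh f a = 0 ∨ walsh f a = sbLambda n ∨ walsh f a = -sbLambda n

/-- A Boolean function is balanced if it takes the value 1 exactly `2^(n-1)` times. -/
def balanced {n : ℕ} (f : (Fin n → ZMod 2) → ZMod 2) : Prop :=
  (Finset.univ.filter fun x => f x = 1).card = 2 ^ (n - 1)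

/-- `b` is a linear structure of `g` if the derivative `D_b g(x) = g(x) ⊕ g(x ⊕ b)` is constant. -/
def isLinearStructure {n : ℕ} (g : (Fin n → ZMod 2) → ZMod 2)
    (b : Fin n → ZMod 2) : Prop :=
  (∀ x, g x + g (x + b) = 0) ∨ (∀ x, g x + g (x + b) = 1)

/-- Elementary CA rule 30: `f(x₁,x₂,x₃) = x₁ ⊕ x₂ ⊕ x₃ ⊕ x₂x₃`. -/
def rule30 : (Fin 3 → ZMod 2) → ZMod 2 :=
  fun x => x 0 + x 1 + x 2 + x 1 * x 2

/-- Extension by zero. -/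
def ext0 {n : ℕ} (x : Fin n → ZMod 2) (k : ℕ) : ZMod 2 := if h : k < n then x ⟨k, h⟩ else 0

/-- The bilinear form of the derivative. -/
def bil (N : ℕ) (X C : ℕ → ZMod 2) : ZMod 2 :=
  ∑ i ∈ Finset.range N, (X (i+1) * C (i+2) + X (i+2) * C (i+1))

/-- The candidates. -/
def cand (n : ℕ) (s t : ZMod 2) : Fin n → ZMod 2 :=
  fun i => if i.val = 0 then s else if i.val % 2 = 1 then t else 0

lemma caStar_eq (n : ℕ) (h : 3 ≤ n) (x : Fin n → ZMod 2) :
    caStar 3 n h rule30 x = ∑ i ∈ Finset.range (n - 3 + 1),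
      (ext0 x i + ext0 x (i+1) + ext0 x (i+2) + ext0 x (i+1) * ext0 x (i+2)) := by
  rw [Finset.sum_range]
  unfold caStar
  refine Finset.sum_congr rfl fun i _ => ?_
  have h0 : i.val < n := by omega
  have h1 : i.val + 1 < n := by omega
  have h2 : i.val + 2 < n := by omega
  simp [rule30, ext0, h0, h1, h2]

lemma ext0_add {n : ℕ} (x b : Fin n → ZMod 2) (k : ℕ) :
    ext0 (x + b) k = ext0 x k + ext0 b k := by
  unfold ext0
  split_ifs <;> simp

lemma two_self (a : ZMod 2) : a + a = 0 := by revert a; decide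

lemma caDeriv_eq (n : ℕ) (h : 3 ≤ n) (x b : Fin n → ZMod 2) :
    caStar 3 n h rule30 x + caStar 3 n h rule30 (x + b) =
      caStar 3 n h rule30 b + bil (n - 3 + 1) (ext0 x) (ext0 b) := by
  simp only [caStar_eq, bil, ← Finset.sum_add_distrib, ext0_add]
  refine Finset.sum_congr rfl fun i _ => ?_
  generalize ext0 x i = a0
  generalize ext0 x (i+1) = a1
  generalize ext0 x (i+2) = a2
  generalize ext0 b i = b0
  generalize ext0 b (i+1) = b1
  generalize ext0 b (i+2) = b2
  revert a0 a1 a2 b0 b1 b2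
  decide

lemma isLS_iff (n : ℕ) (h : 3 ≤ n) (b : Fin n → ZMod 2) :
    isLinearStructure (caStar 3 n h rule30) b ↔
      ∀ x : Fin n → ZMod 2, bil (n - 3 + 1) (ext0 x) (ext0 b) = 0 := by
  unfold isLinearStructure
  simp only [caDeriv_eq]
  have hz : bil (n - 3 + 1) (ext0 (0 : Fin n → ZMod 2)) (ext0 b) = 0 := by
    simp [bil, ext0]
  constructor
  · rintro (H | H) x
    · have h0 := H 0
      have h1 := H x
      rw [hz, add_zero] at h0
      simpa [h0] using h1
    · have h0 := H 0
      have h1 := H x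
      rw [hz, add_zero] at h0
      simpa [h0] using h1
  · intro H
    simp only [H, add_zero]
    generalize caStar 3 n h rule30 b = c
    revert c
    have : ∀ c : ZMod 2, c = 0 ∨ c = 1 := by decide
    intro c
    rcases this c with hc | hc
    · left; intro _; exact hc
    · right; intro _; exact hc

lemma bil_single (n : ℕ) (h : 3 ≤ n) (b : Fin n → ZMod 2) (k : ℕ) (hk : k + 1 < n) :
    bil (n - 3 + 1) (ext0 (fun i : Fin n => if i.val = k + 1 then (1 : ZMod 2) else 0)) (ext0 b)
      = ext0 b (k + 2) + if k = 0 then 0 else ext0 b k := by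
  have e : ∀ j, ext0 (fun i : Fin n => if i.val = k + 1 then (1 : ZMod 2) else 0) j
      = if j = k + 1 then 1 else 0 := by
    intro j
    unfold ext0
    by_cases hj : j < n
    · simp [hj]
    · have : j ≠ k + 1 := by omega
      simp [hj, this]
  unfold bil
  simp only [e, Finset.sum_add_distrib]
  congr 1
  · simp only [Nat.add_right_cancel_iff, ite_mul, one_mul, zero_mul, Finset.sum_ite_eq',
      Finset.mem_range]
    split_ifs with h1
    · rfl
    · have : ¬ (k + 2 < n) := by omega
      simp [ext0, this]
  · rcases k with _ | k
    · simp
    · have e2 : ∀ i, (i + 2 = k + 1 + 1) ↔ i = k := by intro i; omega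
      have : k < n - 3 + 1 := by omega
      simp [e2, this]

lemma bil_cand (X C : ℕ → ZMod 2) (t : ZMod 2) (m : ℕ)
    (h1 : ∀ j, j < 2 * m + 2 → j % 2 = 1 → C j = t)
    (h2 : ∀ j, 0 < j → j % 2 = 0 → C j = 0) : bil (2 * m) X C = 0 := by
  induction m with
  | zero => simp [bil]
  | succ m ih =>
    have ih := ih (fun j hj => h1 j (by omega))
    unfold bil at ih ⊢
    rw [show 2 * (m + 1) = 2 * m + 1 + 1 by ring, Finset.sum_range_succ, Finset.sum_range_succ,
      ih, h1 (2*m+1) (by omega) (by omega), h1 (2*m+1+2) (by omega) (by omega),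
      h2 (2*m+2) (by omega) (by omega)]
    simp [two_self]

lemma isLS_iff_cand (n : ℕ) (h : 3 ≤ n) (b : Fin n → ZMod 2) :
    isLinearStructure (caStar 3 n h rule30) b ↔
      ∃ s t, b = cand n s t ∧ (Odd n → t = 0) := by
  rw [isLS_iff]
  constructor
  · intro H
    have K : ∀ k, k + 1 < n → ext0 b (k + 2) = if k = 0 then 0 else ext0 b k := by
      intro k hk
      have h1 := bil_single n h b k hk
      rw [H] at h1
      generalize (if k = 0 then 0 else ext0 b k) = u at *
      generalize ext0 b (k + 2) = v at *
      revert u v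
      decide
    have E : ∀ m, 2 * m < n → ext0 b (2 * m + 2) = 0 := by
      intro m
      induction m with
      | zero => intro _; simpa using K 0 (by omega)
      | succ m ih =>
        intro hm
        by_cases hn : 2 * (m + 1) + 1 < n
        · rw [K _ hn, if_neg (by omega)]
          exact ih (by omega)
        · have : ¬ (2 * (m + 1) + 2 < n) := by omega
          simp [ext0, this]
    have O : ∀ m, 2 * m + 1 < n + 1 → ext0 b (2 * m + 1) = ext0 b 1 := by
      intro m
      induction m with
      | zero => intro _; rfl
      | succ m ih =>
        intro hm
        have := K (2 * m + 1) (by omega)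
        rw [if_neg (by omega)] at this
        rw [← ih (by omega), ← this]
        rfl
    refine ⟨ext0 b 0, ext0 b 1, ?_, ?_⟩
    · funext i
      have hi : b i = ext0 b i.val := by simp [ext0]
      rw [hi]
      unfold cand
      split_ifs with h0 h1
      · rw [h0]
      · have := O (i.val / 2) (by omega)
        rwa [show 2 * (i.val / 2) + 1 = i.val by omega] at this
      · have := E (i.val / 2 - 1) (by omega)
        rwa [show 2 * (i.val / 2 - 1) + 2 = i.val by omega] at this
    · rintro ⟨m, hm⟩
      rw [← O m (by omega), ← hm]
      simp [ext0]
  · rintro ⟨s, t, rfl, ht⟩ x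
    have h2 : ∀ j, 0 < j → j % 2 = 0 → ext0 (cand n s t) j = 0 := by
      intro j h0 h1
      have a : j ≠ 0 := by omega
      simp [ext0, cand, a, h1]
    have h1 : ∀ j, j < n → j % 2 = 1 → ext0 (cand n s t) j = t := by
      intro j h0 h1
      have a : j ≠ 0 := by omega
      simp [ext0, cand, a, h1, h0]
    rcases Nat.even_or_odd n with he | ho
    · obtain ⟨m, hm⟩ := he
      rw [show n - 3 + 1 = 2 * (m - 1) by omega]
      exact bil_cand _ _ t _ (fun j hj => h1 j (by omega)) h2
    · have t0 := ht ho
      subst t0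
      have hz : ∀ j, ext0 (cand n s 0) (j + 1) = 0 := by
        intro j
        simp [ext0, cand]
      refine Finset.sum_eq_zero fun i _ => ?_
      rw [hz i, hz (i + 1)]
      simp

lemma cand_inj (n : ℕ) (h : 3 ≤ n) {s t s' t' : ZMod 2} (e : cand n s t = cand n s' t') :
    s = s' ∧ t = t' := by
  have h0 := congrFun e ⟨0, by omega⟩
  have h1 := congrFun e ⟨1, by omega⟩
  simpa [cand] using And.intro h0 h1

lemma cand_zero (n : ℕ) : cand n 0 0 = 0 := by
  funext i; simp [cand]

/-- for all `3 ≤ n ≤ 20`, the number of nonzero linear structures of the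
function obtained from rule 30 by the CA-based construction is 1 if `n` is odd and
3 if `n` is even. -/
theorem rule30_linear_structures :
    ∀ n (h : 3 ≤ n), n ≤ 20 →
      Nat.card {b : Fin n → ZMod 2 //
        b ≠ 0 ∧ isLinearStructure (caStar 3 n h rule30) b} =
      if Odd n then 1 else 3 := by
  intro n h _
  have z01 : ∀ c : ZMod 2, c = 0 ∨ c = 1 := by decide
  have nz : ∀ s t, cand n s t ≠ 0 ↔ ¬ (s = 0 ∧ t = 0) := by
    intro s t
    rw [not_iff_not, ← cand_zero n]
    constructor
    · exact cand_inj n h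
    · rintro ⟨rfl, rfl⟩; rfl
  change Nat.card ↥{b : Fin n → ZMod 2 | b ≠ 0 ∧ isLinearStructure (caStar 3 n h rule30) b} = _
  rw [Nat.card_coe_set_eq]
  simp only [isLS_iff_cand]
  split_ifs with ho
  · rw [Set.ncard_eq_one]
    refine ⟨cand n 1 0, ?_⟩
    ext b
    simp only [Set.mem_setOf_eq, Set.mem_singleton_iff]
    constructor
    · rintro ⟨hb, s, t, rfl, ht⟩
      have t0 := ht ho
      subst t0
      rcases z01 s with rfl | rfl
      · exact absurd (cand_zero n) hb
      · rfl
    · rintro rfl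
      exact ⟨(nz _ _).2 (by decide), 1, 0, rfl, fun _ => rfl⟩
  · rw [Set.ncard_eq_three]
    refine ⟨cand n 1 0, cand n 0 1, cand n 1 1, ?_, ?_, ?_, ?_⟩
    · intro e; have := cand_inj n h e; revert this; decide
    · intro e; have := cand_inj n h e; revert this; decide
    · intro e; have := cand_inj n h e; revert this; decide
    · ext b
      simp only [Set.mem_setOf_eq, Set.mem_singleton_iff, Set.mem_insert_iff]
      constructor
      · rintro ⟨hb, s, t, rfl, -⟩
        rcases z01 s with rfl | rfl <;> rcases z01 t with rfl | rfl
        · exact absurd (cand_zero n) hb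
        · simp
        · simp
        · simp
      · rintro (rfl | rfl | rfl)
        · exact ⟨(nz _ _).2 (by decide), _, _, rfl, fun o => absurd o ho⟩
        · exact ⟨(nz _ _).2 (by decide), _, _, rfl, fun o => absurd o ho⟩
        · exact ⟨(nz _ _).2 (by decide), _, _, rfl, fun o => absurd o ho⟩
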